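/- Fix r > 0. For every x ∈ ℝ and y ∈ (0, r), the family indexed by k ∈ ℤ with terms sin(πy/r) / ( 2r·( cosh(π(x + 2πk)/r) − cos(πy/r) ) ) is absolutely summable. -/

import Mathlib

open Real

/-!
Since `1 + t² / 2 ≤ cosh t`, the function `t ↦ (cosh t - c)⁻¹` decays at least like `|t|⁻²` at
infinity. The terms of the periodization are, up to a constant factor, the values of such a function
along a nonconstant arithmetic progression, so they are dominated by a shifted series `∑ |k + a|⁻²`.
-/

open Asymptotics Filter

lemma one_add_sq_div_two_le_cosh (t : ℝ) : 1 + t ^ 2 / 2 ≤ cosh t := by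
  simpa [Finset.sum_range_succ] using
    sum_le_hasSum (Finset.range 2) (fun n _ ↦ by rw [pow_mul]; positivity) (Real.hasSum_cosh t)

lemma sq_isBigO_cosh_sub_const (c : ℝ) :
    (fun t : ℝ ↦ t ^ 2) =O[cocompact ℝ] fun t ↦ cosh t - c := by
  have abs_large : ∀ᶠ t : ℝ in cocompact ℝ, 2 * √|c| ≤ |t| :=
    (tendsto_norm_cocompact_atTop (E := ℝ)).eventually_ge_atTop _
  refine IsBigO.of_bound 4 ?_
  filter_upwards [abs_large] with t ht
  have four_mul_abs_le_sq : 4 * |c| ≤ t ^ 2 := by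
    calc 4 * |c| = (2 * √|c|) ^ 2 := by rw [mul_pow, sq_sqrt (abs_nonneg c)]; norm_num
      _ ≤ |t| ^ 2 := by gcongr
      _ = t ^ 2 := sq_abs t
  rw [norm_of_nonneg (sq_nonneg t)]
  calc t ^ 2 ≤ 4 * (cosh t - c) := by
        linarith [one_add_sq_div_two_le_cosh t, le_abs_self c]
    _ ≤ 4 * ‖cosh t - c‖ := by gcongr; exact le_norm_self _

lemma inv_cosh_sub_const_isBigO_rpow (c : ℝ) :
    (fun t ↦ (cosh t - c)⁻¹) =O[cocompact ℝ] fun t ↦ |t| ^ (-2 : ℝ) := by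
  have ne_zero : ∀ᶠ t : ℝ in cocompact ℝ, t ≠ 0 :=
    (Set.finite_singleton (0 : ℝ)).isCompact.compl_mem_cocompact
  have sq_ne_zero : ∀ᶠ t : ℝ in cocompact ℝ, t ^ 2 = 0 → cosh t - c = 0 :=
    ne_zero.mono fun t ht h ↦ absurd h (pow_ne_zero 2 ht)
  simpa [rpow_neg] using (sq_isBigO_cosh_sub_const c).inv_rev sq_ne_zero

lemma tendsto_mul_intCast_add_cofinite_cocompact {a : ℝ} (ha : a ≠ 0) (b : ℝ) :
    Tendsto (fun k : ℤ ↦ a * k + b) cofinite (cocompact ℝ) :=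
  (affineHomeomorph a b ha).isClosedEmbedding.tendsto_cocompact.comp Int.tendsto_coe_cofinite

lemma summable_abs_mul_intCast_add_rpow {a s : ℝ} (ha : a ≠ 0) (b : ℝ) (hs : 1 < s) :
    Summable fun k : ℤ ↦ |a * k + b| ^ (-s) := by
  have shifted := ((summable_one_div_int_add_rpow (b / a) s).mpr hs).mul_left (|a| ^ (-s))
  refine shifted.congr fun k ↦ ?_
  have factor : a * k + b = a * (k + b / a) := by field_simp
  rw [factor, abs_mul, mul_rpow (abs_nonneg _) (abs_nonneg _), rpow_neg (abs_nonneg (k + b / a)),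
    one_div]

lemma summable_comp_mul_intCast_add_of_isBigO_rpow {E : Type*} [SeminormedAddCommGroup E]
    [CompleteSpace E] {f : ℝ → E} {a s : ℝ} (ha : a ≠ 0) (b : ℝ) (hs : 1 < s)
    (hf : f =O[cocompact ℝ] fun t ↦ |t| ^ (-s)) :
    Summable fun k : ℤ ↦ f (a * k + b) :=
  summable_of_isBigO (summable_abs_mul_intCast_add_rpow ha b hs)
    (hf.comp_tendsto (tendsto_mul_intCast_add_cofinite_cocompact ha b))

lemma summable_inv_cosh_mul_intCast_add_sub_const {a : ℝ} (ha : a ≠ 0) (b c : ℝ) :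
    Summable fun k : ℤ ↦ (cosh (a * k + b) - c)⁻¹ :=
  summable_comp_mul_intCast_add_of_isBigO_rpow (f := fun t ↦ (cosh t - c)⁻¹) ha b one_lt_two
    (inv_cosh_sub_const_isBigO_rpow c)

theorem periodized_strip_poisson_kernel_summable_general {r p : ℝ} (hr : r ≠ 0) (hp : p ≠ 0)
    (x y : ℝ) :
    Summable fun k : ℤ ↦
      |sin (π * y / r) / (2 * r * (cosh (π * (x + p * k) / r) - cos (π * y / r)))| := by
  have hstep : π * p / r ≠ 0 := div_ne_zero (mul_ne_zero pi_ne_zero hp) hr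
  have kernel_summable :=
    (summable_inv_cosh_mul_intCast_add_sub_const hstep (π * x / r) (cos (π * y / r))).mul_left
      (sin (π * y / r) / (2 * r))
  refine kernel_summable.abs.congr fun k ↦ ?_
  have arg_eq : π * p / r * k + π * x / r = π * (x + p * k) / r := by ring
  rw [arg_eq, ← div_eq_mul_inv, div_div]

theorem periodized_strip_poisson_kernel_summable
    (r : ℝ) (hr : 0 < r) (x : ℝ) (y : ℝ) (hy : y ∈ Set.Ioo 0 r) :
    Summable fun k : ℤ =>
      |Real.sin (π * y / r) /
        (2 * r * (Real.cosh (π * (x + 2 * π * (k : ℝ)) / r) - Real.cos (π * y / r)))| :=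
  periodized_strip_poisson_kernel_summable_general hr.ne' two_pi_pos.ne' x y
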